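/- Let d ≥ 1 and b > 0 be a real number. For every symmetric positive definite real d×d matrix M with tr M < b, one has − ln(det M) − b · ln(1 − tr M / b) + (b + d) · ln(b / (b + d)) ≤ tr M / (1 − tr M / b)² − 2d / (1 − tr M / b) + tr(M⁻¹). -/

import Mathlib

/-!
Let `z = 1 / (1 - tr M / b) ≥ 1`, let `A = z M` and write `d` for the size of `M`. Since
`tr A = b (z - 1)`, the left-hand side equals `-ln det A + (b + d) ln (b z / (b + d))`. The bound
`ln x ≤ x - 1`, applied to the eigenvalues of `A⁻¹` and to `x = b z / (b + d)`, shows that it is at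
most `tr A + tr A⁻¹ - 2 d`. This quantity is nonnegative, and multiplying it by `z` gives the
right-hand side.
-/

/-- The Peterlin factor of the FENE-P spring force with extensibility `b`, as a function of the
trace `t` of the conformation matrix. -/
noncomputable def peterlinFactor (b t : ℝ) : ℝ :=
  (1 - t / b)⁻¹

section Scalar

variable {b t : ℝ}

theorem mul_log_div_le_sub {x c : ℝ} (hx : 0 < x) (hc : 0 < c) :
    c * Real.log (x / c) ≤ x - c :=
  calc c * Real.log (x / c) ≤ c * (x / c - 1) :=
        mul_le_mul_of_nonneg_left (Real.log_le_sub_one_of_pos (div_pos hx hc)) hc.le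
    _ = x - c := by field_simp

theorem one_sub_div_pos (hb : 0 < b) (htb : t < b) : 0 < 1 - t / b :=
  sub_pos.mpr ((div_lt_one hb).mpr htb)

theorem peterlinFactor_pos (hb : 0 < b) (htb : t < b) : 0 < peterlinFactor b t :=
  inv_pos.mpr (one_sub_div_pos hb htb)

theorem one_le_peterlinFactor (ht : 0 ≤ t) (htb : t < b) : 1 ≤ peterlinFactor b t :=
  have hb : 0 < b := ht.trans_lt htb
  (one_le_inv₀ (one_sub_div_pos hb htb)).mpr (sub_le_self _ (div_nonneg ht hb.le))

theorem peterlinFactor_mul_self (hb : 0 < b) (htb : t < b) :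
    peterlinFactor b t * t = b * (peterlinFactor b t - 1) := by
  have hw : 1 - t / b ≠ 0 := (one_sub_div_pos hb htb).ne'
  have hzw : peterlinFactor b t * (1 - t / b) = 1 := inv_mul_cancel₀ hw
  calc peterlinFactor b t * t
      = b * (peterlinFactor b t - peterlinFactor b t * (1 - t / b)) := by field_simp; ring
    _ = b * (peterlinFactor b t - 1) := by rw [hzw]

theorem log_peterlinFactor (b t : ℝ) :
    Real.log (peterlinFactor b t) = -Real.log (1 - t / b) :=
  Real.log_inv _

end Scalar

section Matrix

open scoped ComplexOrder
open RCLike (re)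

variable {𝕜 n : Type*} [RCLike 𝕜] [Fintype n]

theorem re_trace_smul (c : ℝ) (A : Matrix n n 𝕜) : re (c • A).trace = c * re A.trace := by
  rw [Matrix.trace_smul, RCLike.smul_re]

theorem re_trace_nonneg {A : Matrix n n 𝕜} (hA : A.PosSemidef) : 0 ≤ re A.trace :=
  (RCLike.nonneg_iff.mp hA.trace_nonneg).1

/-- The spring stress of the FENE-P model (up to physical constants) at the conformation matrix
`M`, namely `M / (1 - tr M / b)`. -/
noncomputable def springStress (b : ℝ) (M : Matrix n n 𝕜) : Matrix n n 𝕜 :=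
  peterlinFactor b (re M.trace) • M

theorem posDef_springStress {b : ℝ} {M : Matrix n n 𝕜} (hM : M.PosDef) (hb : 0 < b)
    (htr : re M.trace < b) : (springStress b M).PosDef :=
  hM.smul (peterlinFactor_pos hb htr)

theorem re_trace_springStress {b : ℝ} {M : Matrix n n 𝕜} (hb : 0 < b) (htr : re M.trace < b) :
    re (springStress b M).trace = b * (peterlinFactor b (re M.trace) - 1) := by
  rw [springStress, re_trace_smul, peterlinFactor_mul_self hb htr]

variable [DecidableEq n] {A M : Matrix n n 𝕜} {b : ℝ}

theorem log_re_det_le_re_trace_sub_card (hA : A.PosDef) :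
    Real.log (re A.det) ≤ re A.trace - Fintype.card n := by
  let μ := hA.isHermitian.eigenvalues
  have hdet : re A.det = ∏ i, μ i := by
    rw [hA.isHermitian.det_eq_prod_eigenvalues, ← RCLike.ofReal_prod, RCLike.ofReal_re]
  have htrace : re A.trace = ∑ i, μ i := by
    rw [hA.isHermitian.trace_eq_sum_eigenvalues, ← RCLike.ofReal_sum, RCLike.ofReal_re]
  calc Real.log (re A.det) = ∑ i, Real.log (μ i) := by
        rw [hdet, Real.log_prod fun i _ => (hA.eigenvalues_pos i).ne']
    _ ≤ ∑ i, (μ i - 1) :=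
        Finset.sum_le_sum fun i _ => Real.log_le_sub_one_of_pos (hA.eigenvalues_pos i)
    _ = re A.trace - Fintype.card n := by simp [htrace]

theorem log_re_det_inv (hA : A.IsHermitian) :
    Real.log (re A⁻¹.det) = -Real.log (re A.det) := by
  rw [Matrix.det_nonsing_inv, Ring.inverse_eq_inv', hA.det_eq_prod_eigenvalues,
    ← RCLike.ofReal_prod, ← RCLike.ofReal_inv, RCLike.ofReal_re, RCLike.ofReal_re, Real.log_inv]

theorem neg_log_re_det_le_re_trace_inv_sub_card (hA : A.PosDef) :
    -Real.log (re A.det) ≤ re A⁻¹.trace - Fintype.card n :=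
  log_re_det_inv hA.isHermitian ▸ log_re_det_le_re_trace_sub_card hA.inv

theorem two_mul_card_le_re_trace_add_re_trace_inv (hA : A.PosDef) :
    2 * Fintype.card n ≤ re A.trace + re A⁻¹.trace := by
  linarith [log_re_det_le_re_trace_sub_card hA, neg_log_re_det_le_re_trace_inv_sub_card hA]

theorem log_re_det_smul (hA : re A.det ≠ 0) {c : ℝ} (hc : c ≠ 0) :
    Real.log (re (c • A).det) = Fintype.card n * Real.log c + Real.log (re A.det) := by
  rw [Matrix.det_smul_of_tower, RCLike.smul_re, Real.log_mul (pow_ne_zero _ hc) hA, Real.log_pow]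

theorem re_trace_smul_inv (hA : IsUnit A) {c : ℝ} (hc : c ≠ 0) :
    re (c • A)⁻¹.trace = c⁻¹ * re A⁻¹.trace := by
  have hinv : (c • A)⁻¹ = c⁻¹ • A⁻¹ := by
    apply Matrix.inv_eq_right_inv
    rw [smul_mul_smul_comm, mul_inv_cancel₀ hc, one_smul,
      Matrix.mul_nonsing_inv _ ((Matrix.isUnit_iff_isUnit_det _).mp hA)]
  rw [hinv, re_trace_smul]

theorem fenep_entropy_eq_neg_log_re_det_springStress_add
    (hM : M.PosDef) (hb : 0 < b) (htr : re M.trace < b) :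
    -Real.log (re M.det) - b * Real.log (1 - re M.trace / b) +
        (b + Fintype.card n) * Real.log (b / (b + Fintype.card n)) =
      -Real.log (re (springStress b M).det) + (b + Fintype.card n) *
        Real.log (b * peterlinFactor b (re M.trace) / (b + Fintype.card n)) := by
  have hz := peterlinFactor_pos hb htr
  have hdet : re M.det ≠ 0 := (RCLike.pos_iff.mp hM.det_pos).1.ne'
  have hbn : 0 < b + Fintype.card n := by positivity
  rw [springStress, log_re_det_smul hdet hz.ne', mul_div_right_comm,
    Real.log_mul (div_pos hb hbn).ne' hz.ne', log_peterlinFactor]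
  ring

theorem fenep_entropy_le_re_trace_springStress_add_re_trace_inv
    (hM : M.PosDef) (hb : 0 < b) (htr : re M.trace < b) :
    -Real.log (re M.det) - b * Real.log (1 - re M.trace / b) +
        (b + Fintype.card n) * Real.log (b / (b + Fintype.card n)) ≤
      re (springStress b M).trace + re (springStress b M)⁻¹.trace - 2 * Fintype.card n := by
  have hdet := neg_log_re_det_le_re_trace_inv_sub_card (posDef_springStress hM hb htr)
  have hlog := mul_log_div_le_sub (mul_pos hb (peterlinFactor_pos hb htr))
    (c := b + Fintype.card n) (by positivity)
  rw [fenep_entropy_eq_neg_log_re_det_springStress_add hM hb htr, re_trace_springStress hb htr]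
  linarith

theorem fenep_fisher_information_eq_peterlinFactor_mul
    (hM : IsUnit M) (hb : 0 < b) (htr : re M.trace < b) :
    re M.trace / (1 - re M.trace / b) ^ 2 - 2 * Fintype.card n / (1 - re M.trace / b) +
        re M⁻¹.trace =
      peterlinFactor b (re M.trace) * (re (springStress b M).trace +
        re (springStress b M)⁻¹.trace - 2 * Fintype.card n) := by
  have hz := (peterlinFactor_pos hb htr).ne'
  rw [springStress, re_trace_smul, re_trace_smul_inv hM hz, mul_sub, mul_add,
    mul_inv_cancel_left₀ hz, peterlinFactor, div_eq_mul_inv, div_eq_mul_inv, ← inv_pow]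
  ring

theorem fenep_entropy_le_fisher_information_general (hM : M.PosDef) (htr : re M.trace < b) :
    -Real.log (re M.det) - b * Real.log (1 - re M.trace / b) +
        (b + Fintype.card n) * Real.log (b / (b + Fintype.card n)) ≤
      re M.trace / (1 - re M.trace / b) ^ 2 - 2 * Fintype.card n / (1 - re M.trace / b) +
        re M⁻¹.trace := by
  have htr0 : 0 ≤ re M.trace := re_trace_nonneg hM.posSemidef
  have hb : 0 < b := htr0.trans_lt htr
  have hnonneg : 0 ≤ re (springStress b M).trace + re (springStress b M)⁻¹.trace -
      2 * Fintype.card n :=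
    sub_nonneg.mpr (two_mul_card_le_re_trace_add_re_trace_inv (posDef_springStress hM hb htr))
  rw [fenep_fisher_information_eq_peterlinFactor_mul hM.isUnit hb htr]
  exact (fenep_entropy_le_re_trace_springStress_add_re_trace_inv hM hb htr).trans
    (le_mul_of_one_le_left hnonneg (one_le_peterlinFactor htr0 htr))

end Matrix

/-- Let `d ≥ 1` and `b > 0`. For every symmetric positive definite real `d × d` matrix `M`
with `tr M < b`,
`- ln (det M) - b * ln (1 - tr M / b) + (b + d) * ln (b / (b + d))
  ≤ tr M / (1 - tr M / b)² - 2 d / (1 - tr M / b) + tr (M⁻¹)`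
(the analogue of the log-Sobolev inequality for the FENE-P model). -/
theorem fenep_entropy_le_fisher_information (d : ℕ) (hd : 1 ≤ d) (b : ℝ) (hb : 0 < b)
    (M : Matrix (Fin d) (Fin d) ℝ) (hM : M.PosDef) (htr : M.trace < b) :
    -Real.log M.det - b * Real.log (1 - M.trace / b) + (b + d) * Real.log (b / (b + d)) ≤
      M.trace / (1 - M.trace / b) ^ 2 - 2 * d / (1 - M.trace / b) + (M⁻¹).trace := by
  simpa using fenep_entropy_le_fisher_information_general hM htr
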